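/- Let Π be an equivalence-preserving transformation and let F, F' be CNF formulas with F →_Π F'. Then Aut_sem(F)↓_{Lit(F')} ⊆ Aut_sem(F') and Aut_sem(F')↑^{Lit(F)} ⊆ Aut_sem(F); in particular, every equivalence-preserving transformation is weakly symmetry-preserving and symmetry-lifting. -/

import Mathlib

/-- A literal over a variable type `V`: a variable or its negation. -/
inductive Lit (V : Type) where
  | pos : V → Lit V
  | neg : V → Lit V
deriving DecidableEq

variable {V : Type} [DecidableEq V]

/-- Negation of a literal (so that double negation is the identity). -/
def Lit.negate : Lit V → Lit V
  | .pos v => .neg v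
  | .neg v => .pos v

/-- The underlying variable of a literal. -/
def Lit.var : Lit V → V
  | .pos v => v
  | .neg v => v

/-- A clause is a finite set of literals. -/
abbrev Clause (V : Type) := Finset (Lit V)

/-- A CNF formula is a finite set of clauses. -/
abbrev CNF (V : Type) := Finset (Clause V)

/-- `Var(F)`: the variables occurring in a formula. -/
def CNF.vars (F : CNF V) : Finset V := Finset.sup F (fun C => Finset.image Lit.var C)

/-- `Lit(F) = Var(F) ∪ {v̄ : v ∈ Var(F)}`. -/
def CNF.lits (F : CNF V) : Finset (Lit V) :=
  Finset.image Lit.pos (CNF.vars F) ∪ Finset.image Lit.neg (CNF.vars F)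

/-- The value of a literal under a complete assignment (given on the variables,
which determines a consistent complete assignment on all literals). -/
def Lit.val (σ : V → Bool) : Lit V → Bool
  | .pos v => σ v
  | .neg v => !(σ v)

/-- `C[σ]`: delete from `C` every literal mapped to `⊥` by `σ`
(i.e. keep `l` with `¬l ∉ σ`). -/
def Clause.reduce (σ : V → Bool) (C : Clause V) : Clause V :=
  Finset.filter (fun l => Lit.val σ (Lit.negate l) = false) C

/-- `F[σ]`: delete every clause containing a literal mapped to `⊤` by `σ`
(for a complete assignment: every clause containing no false literal is kept)
and delete from each remaining clause every literal mapped to `⊥`. -/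
def CNF.reduce (F : CNF V) (σ : V → Bool) : CNF V :=
  Finset.image (Clause.reduce σ) (Finset.filter (fun C => ∀ l ∈ C, Lit.val σ l = false) F)

/-- Apply a map on literals elementwise to clauses and formulas. -/
def CNF.map (φ : Lit V → Lit V) (F : CNF V) : CNF V :=
  Finset.image (fun C => Finset.image φ C) F

/-- `φ` is a syntactic symmetry of `F`: a bijection of `Lit(F)` respecting
negation with `φ(F) = F`. -/
def IsSynSym (F : CNF V) (φ : Lit V → Lit V) : Prop :=
  Set.BijOn φ (CNF.lits F : Set (Lit V)) (CNF.lits F : Set (Lit V)) ∧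
  (∀ l ∈ CNF.lits F, φ (Lit.negate l) = Lit.negate (φ l)) ∧
  CNF.map φ F = F

/-- `φ` is a semantic symmetry of `F`: a bijection of `Lit(F)` respecting
negation with `F[σ] = φ(F)[σ]` for every complete assignment `σ`. -/
def IsSemSym (F : CNF V) (φ : Lit V → Lit V) : Prop :=
  Set.BijOn φ (CNF.lits F : Set (Lit V)) (CNF.lits F : Set (Lit V)) ∧
  (∀ l ∈ CNF.lits F, φ (Lit.negate l) = Lit.negate (φ l)) ∧
  ∀ σ : V → Bool, CNF.reduce F σ = CNF.reduce (CNF.map φ F) σ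

/-- Extend a map defined on the literal set `S` by the identity outside `S`. -/
def extendId (S : Finset (Lit V)) (φ : Lit V → Lit V) : Lit V → Lit V :=
  fun l => if l ∈ S then φ l else l

/-- `F[l ↦ ⊤]`: delete every clause containing `l` and delete `l̄` from every
remaining clause. -/
def CNF.assignTrue (F : CNF V) (l : Lit V) : CNF V :=
  Finset.image (fun C => Finset.erase C (Lit.negate l)) (Finset.filter (fun C => l ∉ C) F)

/-!
The value of `φ(F)` under an assignment `σ` is the value of `F` under the assignment `σ ∘ φ`,
so a negation-respecting `φ` carries equivalent formulas to equivalent formulas. Hence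
`F' ≡ F ≡ φ(F) ≡ φ(F')` for a semantic symmetry `φ` of `F` that stabilizes `Lit(F')`, and
`F ≡ F' ≡ φ(F') = ψ(F') ≡ ψ(F)` for the extension `ψ` by the identity of a semantic symmetry `φ`
of `F'`.
-/

section Evaluation

variable {α : Type}

theorem Lit.val_negate (σ : α → Bool) (l : Lit α) : l.negate.val σ = !l.val σ := by
  cases l <;> simp [Lit.val, Lit.negate]

theorem Lit.var_negate (l : Lit α) : l.negate.var = l.var := by
  cases l <;> rfl

/-- The assignment `σ ∘ φ` obtained by pulling `σ` back along a map `φ` of literals. It is read off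
the positive literals, and therefore stands for `l ↦ σ (φ l)` only where `φ` respects negation. -/
def Lit.pullback (φ : Lit α → Lit α) (σ : α → Bool) : α → Bool :=
  fun v => (φ (.pos v)).val σ

theorem Lit.val_pullback {φ : Lit α → Lit α} {l : Lit α} (h : φ l.negate = (φ l).negate)
    (σ : α → Bool) : l.val (Lit.pullback φ σ) = (φ l).val σ := by
  cases l with
  | pos v => rfl
  | neg v =>
    calc (!(φ (.pos v)).val σ) = !(φ (.neg v)).negate.val σ := congrArg (!Lit.val σ ·) h
      _ = (φ (.neg v)).val σ := by rw [Lit.val_negate, Bool.not_not]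

theorem Clause.reduce_eq_empty {σ : α → Bool} {C : Clause α} (h : ∀ l ∈ C, l.val σ = false) :
    Clause.reduce σ C = ∅ := by
  refine Finset.filter_eq_empty_iff.2 fun l hl => ?_
  simp [Lit.val_negate, h l hl]

end Evaluation

namespace CNF

variable {F G : CNF V} {φ ψ : Lit V → Lit V}

theorem mem_lits {l : Lit V} : l ∈ F.lits ↔ l.var ∈ F.vars := by
  cases l <;> simp [lits, Lit.var]

theorem negate_mem_lits {l : Lit V} : l.negate ∈ F.lits ↔ l ∈ F.lits := by
  rw [mem_lits, mem_lits, Lit.var_negate]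

theorem lits_subset_lits (h : F.vars ⊆ G.vars) : F.lits ⊆ G.lits :=
  fun _ hl => mem_lits.2 (h (mem_lits.1 hl))

theorem mem_lits_of_mem {C : Clause V} {l : Lit V} (hC : C ∈ F) (hl : l ∈ C) : l ∈ F.lits :=
  mem_lits.2 (Finset.mem_sup.2 ⟨C, hC, Finset.mem_image_of_mem _ hl⟩)

theorem map_congr (h : ∀ l ∈ F.lits, φ l = ψ l) : F.map φ = F.map ψ :=
  Finset.image_congr fun _ hC => Finset.image_congr fun l hl => h l (mem_lits_of_mem hC hl)

theorem mem_reduce {σ : V → Bool} {D : Clause V} :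
    D ∈ F.reduce σ ↔ D = ∅ ∧ ∃ C ∈ F, ∀ l ∈ C, l.val σ = false := by
  simp only [reduce, Finset.mem_image, Finset.mem_filter]
  constructor
  · rintro ⟨C, ⟨hC, hfalse⟩, rfl⟩
    exact ⟨Clause.reduce_eq_empty hfalse, C, hC, hfalse⟩
  · rintro ⟨rfl, C, hC, hfalse⟩
    exact ⟨C, ⟨hC, hfalse⟩, Clause.reduce_eq_empty hfalse⟩

theorem reduce_map (hφ : ∀ l ∈ F.lits, φ l.negate = (φ l).negate) (σ : V → Bool) :
    (F.map φ).reduce σ = F.reduce (Lit.pullback φ σ) := by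
  ext1 D
  simp only [mem_reduce, map, Finset.exists_mem_image, Finset.forall_mem_image]
  refine and_congr_right fun _ => exists_congr fun C => and_congr_right fun hC =>
    forall₂_congr fun l hl => ?_
  rw [Lit.val_pullback (hφ l (mem_lits_of_mem hC hl))]

theorem reduce_map_eq_reduce_map (hFG : ∀ σ, F.reduce σ = G.reduce σ)
    (hF : ∀ l ∈ F.lits, φ l.negate = (φ l).negate)
    (hG : ∀ l ∈ G.lits, φ l.negate = (φ l).negate) (σ : V → Bool) :
    (F.map φ).reduce σ = (G.map φ).reduce σ := by
  rw [reduce_map hF, reduce_map hG, hFG]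

end CNF

section ExtendId

variable {S : Finset (Lit V)} {φ : Lit V → Lit V} {l : Lit V}

theorem extendId_of_mem (hl : l ∈ S) : extendId S φ l = φ l :=
  if_pos hl

theorem extendId_of_notMem (hl : l ∉ S) : extendId S φ l = l :=
  if_neg hl

theorem extendId_negate (hS : ∀ l, l.negate ∈ S ↔ l ∈ S)
    (hφ : ∀ l ∈ S, φ l.negate = (φ l).negate) (l : Lit V) :
    extendId S φ l.negate = (extendId S φ l).negate := by
  by_cases hl : l ∈ S
  · rw [extendId_of_mem hl, extendId_of_mem ((hS l).2 hl), hφ l hl]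
  · rw [extendId_of_notMem hl, extendId_of_notMem (mt (hS l).1 hl)]

theorem bijOn_extendId {T : Set (Lit V)} (hφ : Set.BijOn φ S S) (hST : ↑S ⊆ T) :
    Set.BijOn (extendId S φ) T T := by
  have on_S : Set.BijOn (extendId S φ) S S :=
    hφ.congr fun _ hl => (extendId_of_mem hl).symm
  have on_diff : Set.BijOn (extendId S φ) (T \ S) (T \ S) :=
    (Set.bijOn_id _).congr fun _ hl => (extendId_of_notMem hl.2).symm
  have injOn_union : Set.InjOn (extendId S φ) (S ∪ T \ S) :=
    (Set.injOn_union Set.disjoint_sdiff_right).2 ⟨on_S.injOn, on_diff.injOn, fun _ ha _ hb hab =>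
      (on_diff.mapsTo hb).2 (hab ▸ on_S.mapsTo ha)⟩
  simpa only [Set.union_sdiff_cancel hST] using on_S.union on_diff injOn_union

end ExtendId

namespace IsSemSym

variable {F F' : CNF V} {φ : Lit V → Lit V}

theorem restrict (hφ : IsSemSym F φ) (hvars : F'.vars ⊆ F.vars)
    (heq : ∀ σ, F.reduce σ = F'.reduce σ)
    (hstab : φ '' (F'.lits : Set (Lit V)) = (F'.lits : Set (Lit V))) : IsSemSym F' φ := by
  obtain ⟨hbij, hneg, hsem⟩ := hφ
  have hsub : F'.lits ⊆ F.lits := CNF.lits_subset_lits hvars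
  have hneg' : ∀ l ∈ F'.lits, φ l.negate = (φ l).negate := fun l hl => hneg l (hsub hl)
  refine ⟨?_, hneg', fun σ => ?_⟩
  · simpa only [hstab] using (hbij.injOn.mono (Finset.coe_subset.2 hsub)).bijOn_image
  · calc F'.reduce σ = F.reduce σ := (heq σ).symm
      _ = (F.map φ).reduce σ := hsem σ
      _ = (F'.map φ).reduce σ := CNF.reduce_map_eq_reduce_map heq hneg hneg' σ

theorem extendId_lits (hφ : IsSemSym F' φ) (hvars : F'.vars ⊆ F.vars)
    (heq : ∀ σ, F.reduce σ = F'.reduce σ) : IsSemSym F (extendId F'.lits φ) := by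
  obtain ⟨hbij, hneg, hsem⟩ := hφ
  have hneg_ext : ∀ l, extendId F'.lits φ l.negate = (extendId F'.lits φ l).negate :=
    extendId_negate (fun _ => CNF.negate_mem_lits) hneg
  have hmap : F'.map φ = F'.map (extendId F'.lits φ) :=
    CNF.map_congr fun _ hl => (extendId_of_mem hl).symm
  refine ⟨bijOn_extendId hbij (Finset.coe_subset.2 (CNF.lits_subset_lits hvars)),
    fun l _ => hneg_ext l, fun σ => ?_⟩
  calc F.reduce σ = F'.reduce σ := heq σ
    _ = (F'.map φ).reduce σ := hsem σ
    _ = (F'.map (extendId F'.lits φ)).reduce σ := by rw [hmap]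
    _ = (F.map (extendId F'.lits φ)).reduce σ :=
      (CNF.reduce_map_eq_reduce_map heq (fun l _ => hneg_ext l) (fun l _ => hneg_ext l) σ).symm

end IsSemSym

/-- If `T` is an equivalence-preserving transformation and
`F →_T F'`, then `Aut_sem(F)↓_{Lit(F')} ⊆ Aut_sem(F')` (so `T` is weakly
symmetry-preserving) and `Aut_sem(F')↑^{Lit(F)} ⊆ Aut_sem(F)` (so `T` is
symmetry-lifting). -/
theorem equivalencePreserving_wsp_and_lifting
    (T : CNF V → Set (CNF V))
    (hvars : ∀ F F' : CNF V, F' ∈ T F → CNF.vars F' ⊆ CNF.vars F)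
    (hfin : ∀ F : CNF V, (T F).Finite)
    (heq : ∀ F F' : CNF V, F' ∈ T F →
      ∀ σ : V → Bool, CNF.reduce F σ = CNF.reduce F' σ)
    (F F' : CNF V) (h : F' ∈ T F) :
    (∀ φ : Lit V → Lit V, IsSemSym F φ →
        φ '' (CNF.lits F' : Set (Lit V)) = (CNF.lits F' : Set (Lit V)) →
        IsSemSym F' φ) ∧
    (∀ φ : Lit V → Lit V, IsSemSym F' φ →
        IsSemSym F (extendId (CNF.lits F') φ)) := by
  exact ⟨fun _ hφ hstab => hφ.restrict (hvars F F' h) (heq F F' h) hstab,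
    fun _ hφ => hφ.extendId_lits (hvars F F' h) (heq F F' h)⟩
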